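/- arXiv:1906.09737 — 3 statements merged into one kernel-verified Lean document; each statement's English description precedes it below -/
import Mathlib

section
/- Let ρ_1,…,ρ_n be density matrices on ℂ^d with prior probabilities q_1,…,q_n > 0 summing to 1, fix an index m ∈ {1,…,n}, and let D ≥ 1 be an integer. Then the following are equivalent: (i) for every k ∈ {1,…,n}, the matrix q_m^{1/D} ρ_m − q_k^{1/D} ρ_k is positive semidefinite; (ii) for every k ∈ {1,…,n} and every tuple of matrices A_1,…,A_D on ℂ^d with 0 ≤ A_j ≤ I (each A_j positive semidefinite and I − A_j positive semidefinite), one has q_m ∏_{j=1}^D tr(ρ_m A_j) ≥ q_k ∏_{j=1}^D tr(ρ_k A_j). -/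
open Matrix
open scoped ComplexOrder

/-- The probability `tr(A ρ)` (real part of the trace). -/
noncomputable def tprob {d : ℕ} (ρ A : Matrix (Fin d) (Fin d) ℂ) : ℝ :=
  ((A * ρ).trace).re

open scoped MatrixOrder in
theorem aux_tprob_nonneg {d : ℕ} {ρ A : Matrix (Fin d) (Fin d) ℂ}
    (hρ : ρ.PosSemidef) (hA : A.PosSemidef) : 0 ≤ tprob ρ A := by
  obtain ⟨B, rfl⟩ := (CStarAlgebra.nonneg_iff_eq_star_mul_self (a := A)).mp
    (Matrix.nonneg_iff_posSemidef.mpr hA)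
  have h := (hρ.mul_mul_conjTranspose_same B).trace_nonneg
  have e : (star B * B * ρ).trace = (B * ρ * Bᴴ).trace := by
    rw [Matrix.star_eq_conjTranspose, Matrix.mul_assoc, Matrix.trace_mul_comm]
  unfold tprob
  rw [e]
  exact (Complex.le_def.mp h).1

theorem aux_tprob_sub {d : ℕ} (ρ σ A : Matrix (Fin d) (Fin d) ℂ) (a b : ℝ) :
    tprob ((a : ℂ) • ρ - (b : ℂ) • σ) A = a * tprob ρ A - b * tprob σ A := by
  simp [tprob, Matrix.mul_sub, Matrix.trace_sub]

theorem aux_effect {d : ℕ} (v : Fin d → ℂ) (hv : v ≠ 0) :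
    ∃ c : ℝ, 0 < c ∧ ((c : ℂ) • vecMulVec v (star v)).PosSemidef ∧
      (1 - (c : ℂ) • vecMulVec v (star v)).PosSemidef := by
  have hpos : 0 < star v ⬝ᵥ v := Matrix.dotProduct_star_self_pos_iff.mpr hv
  obtain ⟨s, hs0, hs⟩ : ∃ s : ℝ, 0 < s ∧ star v ⬝ᵥ v = (s : ℂ) := by
    obtain ⟨h1, h2⟩ := Complex.lt_def.mp hpos
    exact ⟨(star v ⬝ᵥ v).re, h1, Complex.ext rfl (by simpa using h2.symm)⟩
  have hP : ((s⁻¹ : ℝ) : ℂ) • vecMulVec v (star v) * (((s⁻¹ : ℝ) : ℂ) • vecMulVec v (star v))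
      = ((s⁻¹ : ℝ) : ℂ) • vecMulVec v (star v) := by
    have : (s : ℂ) ≠ 0 := by exact_mod_cast hs0.ne'
    rw [Matrix.smul_mul, Matrix.mul_smul, Matrix.vecMulVec_mul_vecMulVec, hs]
    ext i j
    simp [vecMulVec_apply]
    field_simp
    exact Or.inl trivial
  have hpsd : (((s⁻¹ : ℝ) : ℂ) • vecMulVec v (star v)).PosSemidef :=
    (Matrix.posSemidef_vecMulVec_self_star v).smul (by
      rw [Complex.zero_le_real]; positivity)
  refine ⟨s⁻¹, by positivity, hpsd, ?_⟩
  set P := ((s⁻¹ : ℝ) : ℂ) • vecMulVec v (star v)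
  have h := Matrix.posSemidef_conjTranspose_mul_self (1 - P)
  have e : (1 - P)ᴴ * (1 - P) = 1 - P := by
    rw [Matrix.conjTranspose_sub, Matrix.conjTranspose_one, hpsd.isHermitian.eq]
    simp [Matrix.mul_sub, Matrix.sub_mul, hP]
  rwa [e] at h

theorem aux_tprob_vec {d : ℕ} (ρ : Matrix (Fin d) (Fin d) ℂ) (v : Fin d → ℂ) (c : ℝ) :
    tprob ρ ((c : ℂ) • vecMulVec v (star v)) = c * (star v ⬝ᵥ (ρ *ᵥ v)).re := by
  simp only [tprob, Matrix.smul_mul, Matrix.trace_smul, smul_eq_mul, Complex.re_ofReal_mul]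
  rw [Matrix.trace_mul_comm, Matrix.mul_vecMulVec, Matrix.trace_vecMulVec, dotProduct_comm]

/-- Condition (i): `q_m^{1/D} ρ_m − q_k^{1/D} ρ_k ≥ 0` for all `k`, is equivalent to
condition (ii): for every `k` and every tuple of `D` measurement effects `0 ≤ A_j ≤ I`,
`q_m ∏_j tr(ρ_m A_j) ≥ q_k ∏_j tr(ρ_k A_j)`. -/
theorem repeated_messages_always_choose_m_iff {d n : ℕ}
    (ρ : Fin n → Matrix (Fin d) (Fin d) ℂ)
    (hρ : ∀ ν, (ρ ν).PosSemidef ∧ (ρ ν).trace = 1)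
    (q : Fin n → ℝ) (hq : ∀ ν, 0 < q ν) (hqs : ∑ ν, q ν = 1)
    (m : Fin n) (D : ℕ) (hD : 1 ≤ D) :
    (∀ k : Fin n,
        ((((q m) ^ ((1 : ℝ) / D) : ℝ) : ℂ) • ρ m
          - (((q k) ^ ((1 : ℝ) / D) : ℝ) : ℂ) • ρ k).PosSemidef)
    ↔ (∀ (k : Fin n) (A : Fin D → Matrix (Fin d) (Fin d) ℂ),
        (∀ j, (A j).PosSemidef ∧ (1 - A j).PosSemidef) →
        q k * ∏ j, tprob (ρ k) (A j) ≤ q m * ∏ j, tprob (ρ m) (A j)) := by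
  have hD0 : D ≠ 0 := by omega
  have hr : ∀ k, 0 < q k ^ ((1 : ℝ) / D) := fun k => Real.rpow_pos_of_pos (hq k) _
  have hrD : ∀ k, (q k ^ ((1 : ℝ) / D)) ^ D = q k := fun k => by
    rw [one_div]; exact Real.rpow_inv_natCast_pow (hq k).le hD0
  generalize hR : (fun k => q k ^ ((1 : ℝ) / D)) = r at *
  have hR' : ∀ k, q k ^ ((1 : ℝ) / D) = r k := fun k => congrFun hR k
  simp only [hR'] at *
  have hprod : ∀ k (A : Fin D → Matrix (Fin d) (Fin d) ℂ),
      q k * ∏ j, tprob (ρ k) (A j) = ∏ j, (r k * tprob (ρ k) (A j)) := fun k A => by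
    rw [Finset.prod_mul_distrib, Finset.prod_const, Finset.card_univ, Fintype.card_fin, hrD]
  constructor
  · intro h k A hA
    rw [hprod, hprod]
    refine Finset.prod_le_prod (fun j _ => mul_nonneg (hr k).le
      (aux_tprob_nonneg (hρ k).1 (hA j).1)) (fun j _ => ?_)
    have := aux_tprob_nonneg (h k) (hA j).1
    rw [aux_tprob_sub] at this
    linarith
  · intro h k
    have hH : ((r m : ℂ) • ρ m - (r k : ℂ) • ρ k).IsHermitian := by
      have h1 := (hρ m).1.isHermitian.eq
      have h2 := (hρ k).1.isHermitian.eq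
      unfold Matrix.IsHermitian
      simp [Matrix.conjTranspose_sub, Matrix.conjTranspose_smul, h1, h2]
    refine Matrix.PosSemidef.of_dotProduct_mulVec_nonneg hH fun v => ?_
    by_cases hv : v = 0
    · simp [hv]
    obtain ⟨c, hc, hA1, hA2⟩ := aux_effect v hv
    have h1 := h k (fun _ => (c : ℂ) • vecMulVec v (star v)) (fun _ => ⟨hA1, hA2⟩)
    rw [hprod, hprod] at h1
    simp only [Finset.prod_const, Finset.card_univ, Fintype.card_fin] at h1
    have h2 := le_of_pow_le_pow_left₀ hD0
      (mul_nonneg (hr m).le (aux_tprob_nonneg (hρ m).1 hA1)) h1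
    have h3 : 0 ≤ tprob ((r m : ℂ) • ρ m - (r k : ℂ) • ρ k)
        ((c : ℂ) • vecMulVec v (star v)) := by
      rw [aux_tprob_sub]; linarith
    rw [aux_tprob_vec] at h3
    have h4 := nonneg_of_mul_nonneg_right h3 hc
    have h5 := hH.im_star_dotProduct_mulVec_self v
    exact Complex.le_def.mpr ⟨h4, h5.symm⟩
end

section
/- Let ρ_1,…,ρ_n be density matrices on ℂ^d with priors q_1,…,q_n > 0 summing to 1, write ρ̄ = Σ_ν q_ν ρ_ν, and fix ν ∈ {1,…,n}. Let A_i and A_j be positive semidefinite matrices with tr(ρ̄ A_i) > 0, tr(ρ̄ A_j) > 0, tr(ρ_ν A_i) > 0, tr(ρ_ν A_j) > 0. Writing c_ν(A) = q_ν tr(ρ_ν A)/tr(ρ̄ A), one has log c_ν(A_i + A_j) ≤ [ tr(ρ_ν A_i) log c_ν(A_i) + tr(ρ_ν A_j) log c_ν(A_j) ] / tr(ρ_ν (A_i + A_j)), with equality when A_i and A_j are proportional. (Hence the logarithmic utility U = log of the posterior probability satisfies the merging condition C3.) -/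
open Matrix
open scoped ComplexOrder

/-- The confidence of `A` in message `ν`: `q_ν tr(ρ_ν A) / tr(ρ̄ A)`. -/
noncomputable def conf {d n : ℕ} (q : Fin n → ℝ) (ρ : Fin n → Matrix (Fin d) (Fin d) ℂ)
    (ν : Fin n) (A : Matrix (Fin d) (Fin d) ℂ) : ℝ :=
  q ν * tprob (ρ ν) A / tprob (∑ μ, ((q μ : ℂ) • ρ μ)) A

theorem tprob_add' {d : ℕ} (ρ A B : Matrix (Fin d) (Fin d) ℂ) :
    tprob ρ (A + B) = tprob ρ A + tprob ρ B := by
  simp [tprob, Matrix.add_mul]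

theorem trace_im_zero {d : ℕ} (ρ A : Matrix (Fin d) (Fin d) ℂ)
    (h : ρ.IsHermitian) (hA : A.IsHermitian) : ((A * ρ).trace).im = 0 := by
  have h1 : star ((A * ρ).trace) = (A * ρ).trace := by
    rw [← Matrix.trace_conjTranspose, Matrix.conjTranspose_mul, h.eq, hA.eq, Matrix.trace_mul_comm]
  exact Complex.conj_eq_iff_im.mp h1

theorem log_step {q a s C : ℝ} (hq : 0 < q) (ha : 0 < a) (hs : 0 < s) (hC : 0 < C) :
    a * Real.log C ≤ a * Real.log (q * a / s) + (C * s / q - a) := by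
  have hx : 0 < q * a / s := by positivity
  have h := Real.log_le_sub_one_of_pos (div_pos hC hx)
  rw [Real.log_div hC.ne' hx.ne'] at h
  have h2 := mul_le_mul_of_nonneg_left h ha.le
  have h3 : a * (C / (q * a / s) - 1) = C * s / q - a := by field_simp
  rw [h3] at h2
  linarith

/-- The logarithmic utility `log` of the posterior probability satisfies the merging
condition C3:
`log c_ν(A_i + A_j) ≤ [tr(ρ_ν A_i) log c_ν(A_i) + tr(ρ_ν A_j) log c_ν(A_j)] / tr(ρ_ν (A_i + A_j))`,
with equality when `A_i` and `A_j` are proportional. -/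
theorem log_confidence_merging {d n : ℕ}
    (ρ : Fin n → Matrix (Fin d) (Fin d) ℂ)
    (hρ : ∀ ν, (ρ ν).PosSemidef ∧ (ρ ν).trace = 1)
    (q : Fin n → ℝ) (hq : ∀ ν, 0 < q ν) (hqs : ∑ ν, q ν = 1)
    (ν : Fin n)
    (Ai Aj : Matrix (Fin d) (Fin d) ℂ)
    (hAi : Ai.PosSemidef) (hAj : Aj.PosSemidef)
    (hbi : 0 < tprob (∑ μ, ((q μ : ℂ) • ρ μ)) Ai)
    (hbj : 0 < tprob (∑ μ, ((q μ : ℂ) • ρ μ)) Aj)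
    (hνi : 0 < tprob (ρ ν) Ai) (hνj : 0 < tprob (ρ ν) Aj) :
    Real.log (conf q ρ ν (Ai + Aj))
      ≤ (tprob (ρ ν) Ai * Real.log (conf q ρ ν Ai)
          + tprob (ρ ν) Aj * Real.log (conf q ρ ν Aj))
        / tprob (ρ ν) (Ai + Aj)
    ∧ ((∃ c : ℂ, Aj = c • Ai) →
        Real.log (conf q ρ ν (Ai + Aj))
          = (tprob (ρ ν) Ai * Real.log (conf q ρ ν Ai)
              + tprob (ρ ν) Aj * Real.log (conf q ρ ν Aj))
            / tprob (ρ ν) (Ai + Aj)) := by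
  have hqν := hq ν
  constructor
  · simp only [conf, tprob_add']
    generalize tprob (∑ μ, ((q μ : ℂ) • ρ μ)) Ai = s at *
    generalize tprob (∑ μ, ((q μ : ℂ) • ρ μ)) Aj = t at *
    generalize tprob (ρ ν) Ai = a at *
    generalize tprob (ρ ν) Aj = b at *
    generalize q ν = p at *
    rw [le_div_iff₀ (by positivity)]
    have hC : 0 < p * (a + b) / (s + t) := by positivity
    have h1 := log_step hqν hνi hbi hC
    have h2 := log_step hqν hνj hbj hC
    have h3 : p * (a + b) / (s + t) * s / p + p * (a + b) / (s + t) * t / p = a + b := by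
      field_simp
    linarith
  · rintro ⟨c, hc⟩
    have i1 := trace_im_zero (ρ ν) Ai (hρ ν).1.isHermitian hAi.isHermitian
    have i2 := trace_im_zero (ρ ν) Aj (hρ ν).1.isHermitian hAj.isHermitian
    have hcim : c.im = 0 := by
      rw [hc, Matrix.smul_mul, Matrix.trace_smul, smul_eq_mul, Complex.mul_im, i1] at i2
      have h0 : ((Ai * ρ ν).trace).re ≠ 0 := hνi.ne'
      simpa [h0] using i2
    have hk : ∀ σ, tprob σ Aj = c.re * tprob σ Ai := by
      intro σ
      simp [tprob, hc, Matrix.smul_mul, Matrix.trace_smul, hcim]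
    have hcr : 0 < c.re := by
      rw [hk] at hνj
      exact pos_of_mul_pos_left hνj hνi.le
    simp only [conf, tprob_add', hk]
    generalize tprob (∑ μ, ((q μ : ℂ) • ρ μ)) Ai = s at *
    generalize tprob (ρ ν) Ai = a at *
    generalize q ν = p at *
    generalize c.re = k at *
    have e1 : p * (a + k * a) / (s + k * s) = p * a / s := by
      have : s + k * s ≠ 0 := by positivity
      field_simp
    have e2 : p * (k * a) / (k * s) = p * a / s := by field_simp
    have : a + k * a ≠ 0 := by positivity
    rw [e1, e2, eq_div_iff this]
    ring
end

section
/- Let f be any real-valued function on POVMs on ℂ^d that is monotone under post-processing, i.e., f(β) ≤ f(α) whenever β is a post-processing of α. Then for every POVM α on ℂ^d there exists a POVM α′ on ℂ^d all of whose elements have rank at most 1 such that f(α′) ≥ f(α). In particular, the supremum of f over all POVMs equals its supremum over POVMs with only rank-≤1 elements. -/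
open Matrix
open scoped ComplexOrder

/-- A POVM: a finite tuple of positive semidefinite matrices summing to the identity. -/
def IsPOVM {d m : ℕ} (A : Fin m → Matrix (Fin d) (Fin d) ℂ) : Prop :=
  (∀ y, (A y).PosSemidef) ∧ ∑ y, A y = 1

/-- If `f` is a real-valued function on POVMs that is monotone under post-processing,
then every POVM is dominated (in `f`-value) by some POVM with only rank-≤1 elements;
in particular the supremum of `f` over all POVMs equals its supremum over POVMs with
only rank-≤1 elements. -/
theorem monotone_attains_on_rank_one {d : ℕ}
    (f : ∀ m : ℕ, (Fin m → Matrix (Fin d) (Fin d) ℂ) → ℝ)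
    (hmono : ∀ (m m' : ℕ) (A : Fin m → Matrix (Fin d) (Fin d) ℂ)
        (B : Fin m' → Matrix (Fin d) (Fin d) ℂ),
        IsPOVM A → IsPOVM B →
        (∃ p : Fin m' → Fin m → ℝ, (∀ i j, 0 ≤ p i j) ∧ (∀ j, ∑ i, p i j = 1) ∧
          (∀ i, B i = ∑ j, ((p i j : ℂ) • A j))) →
        f m' B ≤ f m A) :
    (∀ (m : ℕ) (A : Fin m → Matrix (Fin d) (Fin d) ℂ), IsPOVM A →
      ∃ (m' : ℕ) (A' : Fin m' → Matrix (Fin d) (Fin d) ℂ),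
        IsPOVM A' ∧ (∀ k, (A' k).rank ≤ 1) ∧ f m A ≤ f m' A')
    ∧ sSup {x : ℝ | ∃ (m : ℕ) (A : Fin m → Matrix (Fin d) (Fin d) ℂ),
          IsPOVM A ∧ f m A = x}
        = sSup {x : ℝ | ∃ (m : ℕ) (A : Fin m → Matrix (Fin d) (Fin d) ℂ),
          IsPOVM A ∧ (∀ k, (A k).rank ≤ 1) ∧ f m A = x} := by
  have key : ∀ (m : ℕ) (A : Fin m → Matrix (Fin d) (Fin d) ℂ), IsPOVM A →
      ∃ (m' : ℕ) (A' : Fin m' → Matrix (Fin d) (Fin d) ℂ),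
        IsPOVM A' ∧ (∀ k, (A' k).rank ≤ 1) ∧ f m A ≤ f m' A' := by
    intro m A hA
    have h := fun y => Matrix.posSemidef_iff_eq_sum_vecMulVec.1 (hA.1 y)
    choose c v hv using h
    let e : (Σ y : Fin m, Fin (c y)) ≃ Fin (∑ y, c y) := finSigmaFinEquiv
    let g : (Σ y : Fin m, Fin (c y)) → Matrix (Fin d) (Fin d) ℂ :=
      fun x => vecMulVec (v x.1 x.2) (star (v x.1 x.2))
    have hP : IsPOVM (fun k => g (e.symm k)) := by
      refine ⟨fun k => posSemidef_vecMulVec_self_star _, ?_⟩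
      rw [e.symm.sum_comp g, Fintype.sum_sigma, ← hA.2]
      exact Finset.sum_congr rfl fun y _ => (hv y).symm
    refine ⟨_, fun k => g (e.symm k), hP, fun k => rank_vecMulVec_le _ _, ?_⟩
    refine hmono _ _ _ _ hP hA ⟨fun i k => if (e.symm k).1 = i then 1 else 0, ?_, ?_, ?_⟩
    · intro i j
      dsimp only
      split_ifs <;> norm_num
    · intro j
      simp
    · intro i
      rw [e.symm.sum_comp (fun x => (((if x.1 = i then 1 else 0 : ℝ) : ℝ) : ℂ) • g x),
        Fintype.sum_sigma, Finset.sum_eq_single i]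
      · simpa using hv i
      · intro b _ hb
        simp [hb]
      · simp
  refine ⟨key, ?_⟩
  set S := {x : ℝ | ∃ (m : ℕ) (A : Fin m → Matrix (Fin d) (Fin d) ℂ),
          IsPOVM A ∧ f m A = x} with hS
  set T := {x : ℝ | ∃ (m : ℕ) (A : Fin m → Matrix (Fin d) (Fin d) ℂ),
          IsPOVM A ∧ (∀ k, (A k).rank ≤ 1) ∧ f m A = x} with hT
  have hTS : T ⊆ S := by
    rintro x ⟨m, A, h1, _, h3⟩
    exact ⟨m, A, h1, h3⟩
  have hST : ∀ x ∈ S, ∃ y ∈ T, x ≤ y := by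
    rintro x ⟨m, A, h1, rfl⟩
    obtain ⟨m', A', h, h', h''⟩ := key m A h1
    exact ⟨_, ⟨m', A', h, h', rfl⟩, h''⟩
  have hub : upperBounds S = upperBounds T := by
    refine Set.Subset.antisymm (upperBounds_mono_set hTS) ?_
    intro b hb x hx
    obtain ⟨y, hy, hxy⟩ := hST x hx
    exact hxy.trans (hb hy)
  rcases S.eq_empty_or_nonempty with h0 | hne
  · rw [h0] at hTS ⊢
    rw [Set.subset_empty_iff.1 hTS]
  have hneT : T.Nonempty := by
    obtain ⟨x, hx⟩ := hne
    obtain ⟨y, hy, _⟩ := hST x hx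
    exact ⟨y, hy⟩
  by_cases hb : BddAbove S
  · have h1 := isLUB_csSup hne hb
    have h2 : IsLUB T (sSup T) := isLUB_csSup hneT (hb.mono hTS)
    rw [IsLUB, ← hub] at h2
    exact h1.unique h2
  · have hb' : ¬ BddAbove T := by
      rw [BddAbove, ← hub]
      exact hb
    rw [Real.sSup_of_not_bddAbove hb, Real.sSup_of_not_bddAbove hb']
end
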